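/- Let $0<a<b<\infty$ and let $\alpha$ be the unique solution of the equation $\tan(\alpha\ln(b/a))+2\alpha=0$ in the interval $(\pi/(2\ln(b/a)),\, \pi/\ln(b/a))$. Then for every real-valued function $f$ with $f^2$ integrable on $[a,b]$, one has $\int_a^b\Big(\frac{1}{x}\int_a^x f(t)\,dt\Big)^2 dx \le \frac{4}{1+4\alpha^2}\int_a^b f^2(x)\,dx$. -/

import Mathlib

open Real MeasureTheory Set

/-- If `h` satisfies the Riccati inequality `h' + h ^ 2 ≤ -q` on `[a, b]` and `0 ≤ h b`, then
`∫ q F ^ 2 ≤ ∫ f ^ 2` for the primitive `F` of `f` vanishing at `a`. -/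
lemma integral_mul_sq_primitive_le_of_riccati {a b : ℝ} (hab : a ≤ b) {f h h' q : ℝ → ℝ}
    (hf : IntervalIntegrable f volume a b)
    (hf2 : IntervalIntegrable (fun x => f x ^ 2) volume a b)
    (hh : ∀ x ∈ Icc a b, HasDerivAt h (h' x) x) (hh' : ContinuousOn h' (Icc a b))
    (hq : ContinuousOn q (Icc a b)) (hric : ∀ x ∈ Icc a b, h' x + h x ^ 2 ≤ -q x)
    (hb : 0 ≤ h b) :
    ∫ x in a..b, q x * (∫ t in a..x, f t) ^ 2 ≤ ∫ x in a..b, f x ^ 2 := by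
  rw [← uIcc_of_le hab] at hh hh' hq hric
  set F : ℝ → ℝ := fun x => ∫ t in a..x, f t with hF
  have hFac : AbsolutelyContinuousOnInterval F a b :=
    hf.absolutelyContinuousOnInterval_intervalIntegral left_mem_uIcc
  have hhac : AbsolutelyContinuousOnInterval h a b := by
    obtain ⟨C, hC⟩ := isCompact_uIcc.exists_bound_of_continuousOn hh'
    exact ((convex_uIcc a b).lipschitzOnWith_of_nnnorm_hasDerivWithin_le (C := C.toNNReal)
      (fun x hx => (hh x hx).hasDerivWithinAt)
      (fun x hx => by
        rw [← NNReal.coe_le_coe, coe_nnnorm]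
        exact (hC x hx).trans (le_coe_toNNReal C))).absolutelyContinuousOnInterval
  have hac : AbsolutelyContinuousOnInterval (fun x => F x * F x * h x) a b :=
    (hFac.fun_mul hFac).fun_mul hhac
  have hqF : IntervalIntegrable (fun x => q x * F x ^ 2) volume a b :=
    (hq.mul (hFac.continuousOn.pow 2)).intervalIntegrable
  have hmono : ∫ x in a..b, deriv (fun x => F x * F x * h x) x
      ≤ ∫ x in a..b, (f x ^ 2 - q x * F x ^ 2) := by
    refine intervalIntegral.integral_mono_ae_restrict hab hac.intervalIntegrable_deriv
      (hf2.sub hqF) ?_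
    rw [← uIcc_of_le hab]
    refine (ae_restrict_iff' measurableSet_uIcc).2 ?_
    filter_upwards [hf.ae_hasDerivAt_integral] with x hx hxm
    have hFx : HasDerivAt F (f x) x := hx hxm a left_mem_uIcc
    change deriv (fun x => F x * F x * h x) x ≤ f x ^ 2 - q x * F x ^ 2
    rw [((hFx.fun_mul hFx).fun_mul (hh x hxm)).deriv]
    nlinarith [mul_le_mul_of_nonneg_left (hric x hxm) (sq_nonneg (F x)),
      sq_nonneg (f x - h x * F x)]
  rw [hac.integral_deriv_eq_sub, intervalIntegral.integral_sub hf2 hqF] at hmono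
  have hFa : F a = 0 := by simp [hF]
  have : 0 ≤ F b * F b * h b := mul_nonneg (mul_self_nonneg _) hb
  rw [hFa] at hmono
  linarith

/-- Hardy's inequality with constant `(1 / 4 + β ^ 2)⁻¹`, when the solution
`√x * sin (β * log (x / a) + δ)` of `w'' = -(1 / 4 + β ^ 2) * w / x ^ 2` is positive on `[a, b]`
and has a nonnegative derivative at `b`. -/
lemma integral_sq_average_le_of_cot_nonneg {a b β δ : ℝ} (ha : 0 < a) (hab : a ≤ b)
    (hβ : 0 ≤ β) (hδ : 0 < δ) (hπ : β * log (b / a) + δ < π)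
    (hb : 0 ≤ 1 / 2 + β * (cos (β * log (b / a) + δ) / sin (β * log (b / a) + δ)))
    {f : ℝ → ℝ} (hf : IntervalIntegrable f volume a b)
    (hf2 : IntervalIntegrable (fun x => f x ^ 2) volume a b) :
    (1 / 4 + β ^ 2) * ∫ x in a..b, ((1 / x) * ∫ t in a..x, f t) ^ 2
      ≤ ∫ x in a..b, f x ^ 2 := by
  set θ : ℝ → ℝ := fun x => β * log (x / a) + δ with hθ
  have hpos : ∀ x ∈ Icc a b, 0 < x := fun x hx => ha.trans_le hx.1
  have hsin : ∀ x ∈ Icc a b, 0 < sin (θ x) := fun x hx => by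
    have h0 : 0 ≤ log (x / a) := log_nonneg ((one_le_div ha).2 hx.1)
    have h1 : log (x / a) ≤ log (b / a) :=
      log_le_log (div_pos (hpos x hx) ha) (by gcongr; exact hx.2)
    exact sin_pos_of_pos_of_lt_pi (by positivity)
      (lt_of_le_of_lt (by simp only [hθ]; gcongr) hπ)
  have hθd : ∀ x ∈ Icc a b, HasDerivAt θ (β / x) x := fun x hx => by
    have hx0 := hpos x hx
    have := ((((hasDerivAt_id x).div_const a).log (div_pos hx0 ha).ne').const_mul β).add_const δ
    refine this.congr_deriv ?_
    simp only [id]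
    field_simp
  have hθc : ContinuousOn θ (Icc a b) := fun x hx => (hθd x hx).continuousAt.continuousWithinAt
  have hkey := integral_mul_sq_primitive_le_of_riccati hab hf hf2
    (h := fun x => (1 / 2 + β * (cos (θ x) / sin (θ x))) / x)
    (h' := fun x => -((1 / 4 + β ^ 2) / x ^ 2)
      - ((1 / 2 + β * (cos (θ x) / sin (θ x))) / x) ^ 2)
    (q := fun x => (1 / 4 + β ^ 2) / x ^ 2) ?_ ?_ ?_ ?_ ?_
  · rw [← intervalIntegral.integral_const_mul]
    refine le_of_eq_of_le (intervalIntegral.integral_congr fun x _ => ?_) hkey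
    ring
  · intro x hx
    have hx0 := (hpos x hx).ne'
    have hs := (hsin x hx).ne'
    have hd := hθd x hx
    refine ((((hd.cos.div hd.sin hs).const_mul β).const_add (1 / 2)).div
      (hasDerivAt_id x) hx0).congr_deriv ?_
    simp only [id, Pi.div_apply]
    field_simp
    ring
  · have := fun x hx => (hsin x hx).ne'
    have := fun x hx => (hpos x hx).ne'
    fun_prop (disch := simp_all)
  · have := fun x hx => (hpos x hx).ne'
    fun_prop (disch := simp_all)
  · intro x _
    simp
  · exact div_nonneg hb (ha.le.trans hab)

/-- Hardy's inequality on `[a, b]` for a function that is integrable together with its square. -/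
lemma integral_sq_average_le {a b : ℝ} (ha : 0 < a) (hab : a < b) {α : ℝ}
    (hα : α ∈ Ioo (π / (2 * log (b / a))) (π / log (b / a)))
    (hroot : tan (α * log (b / a)) + 2 * α = 0)
    {f : ℝ → ℝ} (hf : IntervalIntegrable f volume a b)
    (hf2 : IntervalIntegrable (fun x => f x ^ 2) volume a b) :
    ∫ x in a..b, ((1 / x) * ∫ t in a..x, f t) ^ 2
      ≤ (4 / (1 + 4 * α ^ 2)) * ∫ x in a..b, f x ^ 2 := by
  set L := log (b / a) with hL
  have hL0 : 0 < L := log_pos ((one_lt_div ha).2 hab)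
  have hα0 : 0 < α := lt_trans (by positivity) hα.1
  have hαL : α * L < π := (lt_div_iff₀ hL0).1 hα.2
  have hαL' : π / 2 < α * L := by
    have := (div_lt_iff₀ (by positivity)).1 hα.1
    linarith
  have hs : 0 < sin (α * L) := sin_pos_of_pos_of_lt_pi (by positivity) hαL
  have hc : cos (α * L) < 0 := cos_neg_of_pi_div_two_lt_of_lt hαL' (by linarith [pi_pos])
  have hcot : 1 / 2 + α * (cos (α * L) / sin (α * L)) = 0 := by
    rw [tan_eq_sin_div_cos] at hroot
    have := hc.ne
    field_simp at hroot ⊢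
    linarith
  have hlim : (1 / 4 + α ^ 2) * ∫ x in a..b, ((1 / x) * ∫ t in a..x, f t) ^ 2
      ≤ ∫ x in a..b, f x ^ 2 := by
    have hcont : ContinuousWithinAt (fun β : ℝ => (1 / 4 + β ^ 2) *
        ∫ x in a..b, ((1 / x) * ∫ t in a..x, f t) ^ 2) (Iio α) α := by fun_prop
    refine le_of_tendsto hcont ?_
    filter_upwards [Ioo_mem_nhdsLT hα0] with β hβ
    have hphase : β * log (b / a) + (α - β) * L = α * L := by rw [← hL]; ring
    refine integral_sq_average_le_of_cot_nonneg ha hab.le hβ.1.le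
      (mul_pos (sub_pos.2 hβ.2) hL0) (hphase ▸ hαL) ?_ hf hf2
    rw [hphase, ← hcot]
    have := mul_le_mul_of_nonpos_right hβ.2.le (div_nonpos_of_nonpos_of_nonneg hc.le hs.le)
    linarith
  rw [div_mul_eq_mul_div, le_div_iff₀ (by positivity)]
  linarith

/-- If `f ^ 2` is integrable on `[a, b]`, with `f` possibly not measurable, then there is a largest
subinterval `[a, c]` on which `f` is integrable. -/
lemma exists_forall_intervalIntegrable_iff_le {a b : ℝ} (hab : a ≤ b) {f : ℝ → ℝ}
    (hf : IntegrableOn (fun x => f x ^ 2) (Icc a b)) :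
    ∃ c ∈ Icc a b, ∀ x ∈ Icc a b, IntervalIntegrable f volume a x ↔ x ≤ c := by
  set S : Set ℝ := {x ∈ Icc a b | IntervalIntegrable f volume a x} with hS
  have hne : S.Nonempty := ⟨a, left_mem_Icc.2 hab, IntervalIntegrable.refl⟩
  have hbdd : BddAbove S := ⟨b, fun x hx => hx.1.2⟩
  have hle : ∀ x ∈ S, x ≤ sSup S := fun x hx => le_csSup hbdd hx
  have hc : sSup S ∈ Icc a b :=
    ⟨hle a ⟨left_mem_Icc.2 hab, IntervalIntegrable.refl⟩, csSup_le hne fun x hx => hx.1.2⟩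
  obtain ⟨u, -, hu, huS⟩ := exists_seq_tendsto_sSup hne hbdd
  have hmeas : AEStronglyMeasurable f (volume.restrict (Ioo a (sSup S))) := by
    refine AEStronglyMeasurable.mono_set (t := ⋃ n, Ioc a (u n)) (fun x hx => ?_)
      (aestronglyMeasurable_iUnion_iff.2 fun n => (huS n).2.1.aestronglyMeasurable)
    obtain ⟨n, hn⟩ := (hu.eventually_const_lt hx.2).exists
    exact mem_iUnion.2 ⟨n, hx.1, hn.le⟩
  have hint : IntervalIntegrable f volume a (sSup S) := by
    rw [intervalIntegrable_iff_integrableOn_Ioo_of_le hc.1]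
    have hL2 : MemLp f 2 (volume.restrict (Ioo a (sSup S))) :=
      (memLp_two_iff_integrable_sq hmeas).2
        (hf.mono_set fun x hx => ⟨hx.1.le, hx.2.le.trans hc.2⟩)
    exact hL2.integrable one_le_two
  refine ⟨sSup S, hc, fun x hx => ⟨fun h => hle x ⟨hx, h⟩, fun h => hint.mono_set ?_⟩⟩
  rw [uIcc_of_le hx.1, uIcc_of_le hc.1]
  exact Icc_subset_Icc_right h

theorem hardy_inequality_interval (a b : ℝ) (ha : 0 < a) (hab : a < b)
    (α : ℝ)
    (hα : α ∈ Set.Ioo (π / (2 * Real.log (b / a))) (π / Real.log (b / a)))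
    (hroot : Real.tan (α * Real.log (b / a)) + 2 * α = 0)
    (f : ℝ → ℝ) (hf : IntegrableOn (fun x => f x ^ 2) (Set.Icc a b)) :
    ∫ x in a..b, ((1 / x) * ∫ t in a..x, f t) ^ 2
      ≤ (4 / (1 + 4 * α ^ 2)) * ∫ x in a..b, f x ^ 2 := by
  obtain ⟨c, hc, hfc⟩ := exists_forall_intervalIntegrable_iff_le hab.le hf
  set g : ℝ → ℝ := (Iic c).indicator f with hg
  have hf2 : IntervalIntegrable (fun x => f x ^ 2) volume a b :=
    (intervalIntegrable_iff_integrableOn_Icc_of_le hab.le).2 hf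
  have hgsq : (fun x => g x ^ 2) = (Iic c).indicator fun x => f x ^ 2 := by
    ext x
    by_cases hx : x ∈ Iic c <;> simp [hg, hx]
  have hg1 : IntervalIntegrable g volume a b := by
    have := (hfc c hc).2 le_rfl
    rw [intervalIntegrable_iff_integrableOn_Ioc_of_le hc.1] at this
    rw [intervalIntegrable_iff_integrableOn_Ioc_of_le hab.le, IntegrableOn,
      integrable_indicator_iff measurableSet_Iic, IntegrableOn,
      Measure.restrict_restrict measurableSet_Iic]
    exact this.mono_set fun x hx => ⟨hx.2.1, hx.1⟩
  have hg2 : IntervalIntegrable (fun x => g x ^ 2) volume a b := by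
    rw [hgsq, intervalIntegrable_iff_integrableOn_Ioc_of_le hab.le]
    exact (hf.mono_set Ioc_subset_Icc_self).indicator measurableSet_Iic
  have hle : ∀ x ∈ Icc a b,
      ((1 / x) * ∫ t in a..x, f t) ^ 2 ≤ ((1 / x) * ∫ t in a..x, g t) ^ 2 := fun x hx => by
    by_cases hxc : x ≤ c
    · refine le_of_eq ?_
      congr 2
      refine intervalIntegral.integral_congr fun t ht => ?_
      rw [uIcc_of_le hx.1] at ht
      exact (indicator_of_mem (s := Iic c) (ht.2.trans hxc) f).symm
    · rw [intervalIntegral.integral_undef (mt (hfc x hx).1 hxc)]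
      simpa using sq_nonneg _
  have hGint : IntervalIntegrable (fun x => ((1 / x) * ∫ t in a..x, g t) ^ 2) volume a b := by
    have hGc : ContinuousOn (fun x => ∫ t in a..x, g t) (uIcc a b) :=
      (hg1.absolutelyContinuousOnInterval_intervalIntegral left_mem_uIcc).continuousOn
    refine ContinuousOn.intervalIntegrable (ContinuousOn.pow (ContinuousOn.mul ?_ hGc) 2)
    refine continuousOn_const.div continuousOn_id fun x hx => ?_
    rw [uIcc_of_le hab.le] at hx
    exact (ha.trans_le hx.1).ne'
  calc ∫ x in a..b, ((1 / x) * ∫ t in a..x, f t) ^ 2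
      ≤ ∫ x in a..b, ((1 / x) * ∫ t in a..x, g t) ^ 2 := by
        rw [intervalIntegral.integral_of_le hab.le, intervalIntegral.integral_of_le hab.le]
        refine integral_mono_of_nonneg (ae_of_all _ fun x => sq_nonneg _) hGint.1 ?_
        exact (ae_restrict_iff' measurableSet_Ioc).2
          (ae_of_all _ fun x hx => hle x (Ioc_subset_Icc_self hx))
    _ ≤ (4 / (1 + 4 * α ^ 2)) * ∫ x in a..b, g x ^ 2 :=
        integral_sq_average_le ha hab hα hroot hg1 hg2
    _ ≤ (4 / (1 + 4 * α ^ 2)) * ∫ x in a..b, f x ^ 2 := by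
        gcongr
        refine intervalIntegral.integral_mono hab.le hg2 hf2 fun x => ?_
        rw [congrFun hgsq x]
        exact indicator_le_self' (fun _ _ => sq_nonneg _) x
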